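/- arXiv:1605.00773 — 2 statements merged into one kernel-verified Lean document; each statement's English description precedes it below -/
import Mathlib

section
/- Let V be an n-element set, let X ⊆ V with |X| = ⌈(n+1)/3⌉, and let H be the 3-graph on V whose edges are all 3-element subsets e of V with |e ∩ X| ≠ 2. Then H contains no tight Hamiltonian cycle, and for every ε > 0 there exists n_0 such that for all n ≥ n_0, δ(H) ≥ (5/9 − ε)·C(n−1,2). -/
open Finset

/-- A tight Hamiltonian cycle in a 3-graph `H` on a finite vertex set `V`:
a cyclic ordering of all vertices in which every three cyclically
consecutive vertices form an edge of `H`. -/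
def HasTightHamCycle {V : Type} [DecidableEq V] [Fintype V] (H : Finset (Finset V)) : Prop :=
  ∃ f : ZMod (Fintype.card V) → V, Function.Bijective f ∧
    ∀ i, ({f i, f (i + 1), f (i + 2)} : Finset V) ∈ H

/-- The 3-graph on `V` whose edges are all 3-element subsets `e` with `|e ∩ X| ≠ 2`. -/
def compX (V : Type) [DecidableEq V] [Fintype V] (X : Finset V) : Finset (Finset V) :=
  ((Finset.univ : Finset V).powersetCard 3).filter fun e => (e ∩ X).card ≠ 2

theorem ceil_bounds (x n : ℕ) (h : (x : ℤ) = ⌈((n : ℚ) + 1) / 3⌉) :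
    n + 1 ≤ 3 * x ∧ 3 * x ≤ n + 3 := by
  have h1 := Int.le_ceil (((n : ℚ) + 1) / 3)
  have h2 := Int.ceil_lt_add_one (((n : ℚ) + 1) / 3)
  rw [← h] at h1 h2
  push_cast at h1 h2
  constructor
  · have : (n : ℚ) + 1 ≤ 3 * x := by linarith
    exact_mod_cast this
  · have : (3 : ℚ) * x < n + 4 := by linarith
    have : 3 * x < n + 4 := by exact_mod_cast this
    omega

theorem no_cycle (V : Type) [DecidableEq V] [Fintype V] (X : Finset V)
    (hX : Fintype.card V + 1 ≤ 3 * X.card) (hX' : 3 * X.card ≤ Fintype.card V + 3) :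
    ¬ HasTightHamCycle (compX V X) := by
  rintro ⟨f, hf, hE⟩
  have hpos : 0 < Fintype.card V := Fintype.card_pos_iff.2 ⟨f 0⟩
  have : NeZero (Fintype.card V) := ⟨hpos.ne'⟩
  have hprop : ∀ i, f i ≠ f (i+1) ∧ f i ≠ f (i+2) ∧ f (i+1) ≠ f (i+2) ∧
      (({f i, f (i + 1), f (i + 2)} : Finset V) ∩ X).card ≠ 2 := by
    intro i
    have h := hE i
    simp only [compX, mem_filter, mem_powersetCard] at h
    obtain ⟨⟨-, h3⟩, h2⟩ := h
    refine ⟨?_, ?_, ?_, h2⟩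
    · intro e
      rw [e] at h3
      have := Finset.card_le_two (a := f (i+1)) (b := f (i+2))
      simp at h3; omega
    · intro e
      rw [e] at h3
      have := Finset.card_le_two (a := f (i+1)) (b := f (i+2))
      rw [Finset.insert_comm] at h3
      simp at h3; omega
    · intro e
      rw [e] at h3
      have := Finset.card_le_two (a := f i) (b := f (i+2))
      simp at h3; omega
  have h3V : 3 ≤ Fintype.card V := by
    have h := hE 0
    simp only [compX, mem_filter, mem_powersetCard] at h
    rw [← h.1.2]; exact Finset.card_le_univ _
  set g : ZMod (Fintype.card V) → ℕ := fun i => if f i ∈ X then 1 else 0 with hg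
  have hcard : ∀ i, (({f i, f (i + 1), f (i + 2)} : Finset V) ∩ X).card
      = g i + g (i+1) + g (i+2) := by
    intro i
    obtain ⟨a, b, c, -⟩ := hprop i
    rw [← Finset.filter_mem_eq_inter, Finset.card_filter, Finset.sum_insert (by simp [a, b]),
      Finset.sum_insert (by simp [c]), Finset.sum_singleton, add_assoc]
  have hsum : ∑ i, g i = X.card := by
    rw [hg, hf.sum_comp (fun v => if v ∈ X then 1 else 0)]
    simp
  have ht : ∀ a : ZMod (Fintype.card V), ∑ i, g (i+a) = ∑ i, g i := fun a =>
    Equiv.sum_comp (Equiv.addRight a) g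
  have hs : ∑ i, (g i + g (i+1) + g (i+2)) = 3 * X.card := by
    rw [Finset.sum_add_distrib, Finset.sum_add_distrib, ht, ht, hsum]
    ring
  have hne : ∀ i, g i + g (i+1) + g (i+2) ≠ 2 := fun i => hcard i ▸ (hprop i).2.2.2
  have hle : ∀ i, g i ≤ 1 := fun i => by simp only [hg]; split_ifs <;> simp
  have hex : ∃ i, 2 ≤ g i + g (i+1) + g (i+2) := by
    by_contra! hc
    have : ∑ i, (g i + g (i+1) + g (i+2)) ≤ ∑ i : ZMod (Fintype.card V), 1 :=
      Finset.sum_le_sum fun i _ => by have := hc i; omega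
    rw [hs] at this
    simp [ZMod.card] at this
    omega
  obtain ⟨i, hi⟩ := hex
  have key : ∀ k : ℕ, g (i+k) + g (i+k+1) + g (i+k+2) = 3 := by
    intro k
    induction k with
    | zero =>
      have := hne i; have := hle i; have := hle (i+1); have := hle (i+2)
      simp; omega
    | succ k ih =>
      have e1 : i + ((k+1 : ℕ) : ZMod (Fintype.card V)) = i + k + 1 := by push_cast; ring
      have e2 : i + k + 1 + 1 = i + k + 2 := by ring
      have := hne (i+k+1)
      rw [e1]
      rw [e2] at this ⊢
      have := hle (i+k); have := hle (i+k+1); have := hle (i+k+2); have := hle (i+k+1+2)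
      omega
  have hall : ∀ j, g j = 1 := by
    intro j
    have := key (j - i).val
    rw [ZMod.natCast_zmod_val, add_sub_cancel] at this
    have := hle j; have := hle (j+1); have := hle (j+2)
    omega
  have : X.card = Fintype.card V := by
    rw [← hsum]; simp [hall, ZMod.card]
  omega

theorem deg_ge (V : Type) [DecidableEq V] [Fintype V] (X : Finset V) (v : V)
    (S : Finset (Finset V)) (hS : ∀ p ∈ S, p.card = 2 ∧ v ∉ p ∧ (insert v p ∩ X).card ≠ 2) :
    S.card ≤ ((compX V X).filter fun e => v ∈ e).card := by
  apply Finset.card_le_card_of_injOn (fun p => insert v p)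
  · intro p hp
    obtain ⟨a, b, c⟩ := hS p hp
    simp only [compX, coe_filter, mem_filter, mem_powersetCard, Set.mem_ofPred_eq]
    refine ⟨⟨⟨subset_univ _, ?_⟩, c⟩, mem_insert_self _ _⟩
    rw [card_insert_of_notMem b, a]
  · intro p hp q hq h
    have hp := (hS p hp).2.1
    have hq := (hS q hq).2.1
    have := congrArg (fun s => s.erase v) h
    simpa [erase_insert hp, erase_insert hq] using this

theorem deg_in (V : Type) [DecidableEq V] [Fintype V] (X : Finset V) (v : V) (hv : v ∈ X) :
    (X.card - 1).choose 2 + (Fintype.card V - X.card).choose 2 ≤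
      ((compX V X).filter fun e => v ∈ e).card := by
  have hd : Disjoint ((X.erase v).powersetCard 2) (Xᶜ.powersetCard 2) := by
    rw [Finset.disjoint_left]
    intro p hp hq
    rw [mem_powersetCard] at hp hq
    obtain ⟨a, ha⟩ := Finset.card_pos.1 (by omega : 0 < p.card)
    have h1 := hp.1 ha
    have h2 := hq.1 ha
    simp at h1 h2
    exact h2 h1.2
  have := deg_ge V X v ((X.erase v).powersetCard 2 ∪ Xᶜ.powersetCard 2) ?_
  · rwa [card_union_of_disjoint hd, card_powersetCard, card_powersetCard, card_erase_of_mem hv,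
      card_compl] at this
  · intro p hp
    rw [mem_union, mem_powersetCard, mem_powersetCard] at hp
    rcases hp with ⟨h1, h2⟩ | ⟨h1, h2⟩
    · have hvp : v ∉ p := fun h => by simpa using h1 h
      refine ⟨h2, hvp, ?_⟩
      rw [inter_eq_left.2, card_insert_of_notMem hvp, h2]
      · simp
      · exact insert_subset hv (h1.trans (erase_subset _ _))
    · have hvp : v ∉ p := fun h => by have := h1 h; simp at this; exact this hv
      refine ⟨h2, hvp, ?_⟩
      have : p ∩ X = ∅ := by
        rw [← disjoint_iff_inter_eq_empty]
        exact (disjoint_compl_left (a := X)).mono_left h1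
      rw [insert_inter_of_mem hv, this]
      simp

theorem deg_out (V : Type) [DecidableEq V] [Fintype V] (X : Finset V) (v : V) (hv : v ∉ X) :
    (Fintype.card V - 1).choose 2 ≤
      ((compX V X).filter fun e => v ∈ e).card + X.card.choose 2 := by
  have := deg_ge V X v ((univ.erase v).powersetCard 2 \ X.powersetCard 2) ?_
  · have h2 := le_card_sdiff (X.powersetCard 2) ((univ.erase v).powersetCard 2)
    rw [card_powersetCard, card_powersetCard, card_erase_of_mem (mem_univ v), card_univ] at h2
    omega
  · intro p hp
    rw [mem_sdiff, mem_powersetCard, mem_powersetCard] at hp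
    obtain ⟨⟨h1, h2⟩, h3⟩ := hp
    have hvp : v ∉ p := fun h => by simpa using h1 h
    refine ⟨h2, hvp, ?_⟩
    rw [insert_inter_of_notMem hv]
    intro h
    apply h3
    refine ⟨?_, h2⟩
    rw [← inter_eq_left]
    exact eq_of_subset_of_card_le inter_subset_left (by omega)

/-- If `|X| = ⌈(n+1)/3⌉`, then the 3-graph of all triples `e` with `|e ∩ X| ≠ 2` has no
tight Hamiltonian cycle, and for every `ε > 0` its minimum vertex degree is at least
`(5/9 - ε)·C(n-1,2)` once `n` is large. -/
theorem stmt_1 :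
    (∀ (V : Type) [DecidableEq V] [Fintype V], ∀ X : Finset V,
        (X.card : ℤ) = ⌈((Fintype.card V : ℚ) + 1) / 3⌉ →
        ¬ HasTightHamCycle (compX V X)) ∧
    (∀ ε : ℝ, 0 < ε → ∃ n₀ : ℕ, ∀ n : ℕ, n₀ ≤ n →
      ∀ (V : Type) [DecidableEq V] [Fintype V], ∀ X : Finset V,
        Fintype.card V = n →
        (X.card : ℤ) = ⌈((n : ℚ) + 1) / 3⌉ →
        ∀ v : V, (5 / 9 - ε) * ((n - 1).choose 2 : ℝ) ≤
          (((compX V X).filter fun e => v ∈ e).card : ℝ)) := by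
  constructor
  · intro V _ _ X h
    obtain ⟨h1, h2⟩ := ceil_bounds _ _ h
    exact no_cycle V X h1 h2
  · intro ε hε
    refine ⟨⌈2 / ε⌉₊ + 10, ?_⟩
    intro n hn V _ _ X hV hX v
    obtain ⟨h1, h2⟩ := ceil_bounds _ _ hX
    have hn10 : 10 ≤ n := by omega
    have hnR : 2 / ε + 10 ≤ (n : ℝ) := by
      have := Nat.le_ceil (2 / ε)
      have h : ((⌈2 / ε⌉₊ + 10 : ℕ) : ℝ) ≤ n := by exact_mod_cast hn
      push_cast at h
      linarith
    have hεn : 2 ≤ ε * ((n : ℝ) - 2) := by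
      have : 2 / ε ≤ (n : ℝ) - 2 := by linarith
      rw [div_le_iff₀ hε] at this
      linarith
    have hn10R : (10 : ℝ) ≤ n := by exact_mod_cast hn10
    have hεn2 : 2 * ((n : ℝ) - 1) ≤ ε * ((n : ℝ) - 2) * (n - 1) :=
      mul_le_mul_of_nonneg_right hεn (by linarith)
    have c1 : (((n - 1 : ℕ).choose 2 : ℕ) : ℝ) = ((n : ℝ) - 1) * (n - 2) / 2 := by
      rw [Nat.cast_choose_two, Nat.cast_sub (by omega)]; push_cast; ring
    have h1R : (n : ℝ) + 1 ≤ 3 * X.card := by exact_mod_cast h1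
    have h2R : 3 * (X.card : ℝ) ≤ n + 3 := by exact_mod_cast h2
    rw [c1]
    by_cases hv : v ∈ X
    · have hd := deg_in V X v hv
      rw [hV] at hd
      have hdR : (((X.card - 1).choose 2 : ℕ) : ℝ) + (((n - X.card).choose 2 : ℕ) : ℝ) ≤
          (((compX V X).filter fun e => v ∈ e).card : ℝ) := by exact_mod_cast hd
      rw [Nat.cast_choose_two, Nat.cast_choose_two, Nat.cast_sub (by omega),
        Nat.cast_sub (by omega)] at hdR
      refine le_trans ?_ hdR
      generalize (X.card : ℝ) = x at *
      push_cast
      obtain ⟨c, rfl⟩ : ∃ c, x = (n + c) / 3 := ⟨3 * x - n, by ring⟩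
      have hc1 : 1 ≤ c := by linarith
      have hc2 : c ≤ 3 := by linarith
      nlinarith [mul_nonneg (sub_nonneg.2 hc2) (by linarith : (0:ℝ) ≤ n), sq_nonneg c]
    · have hd := deg_out V X v hv
      rw [hV] at hd
      have hdR : (((n - 1).choose 2 : ℕ) : ℝ) ≤
          (((compX V X).filter fun e => v ∈ e).card : ℝ) + ((X.card.choose 2 : ℕ) : ℝ) := by
        exact_mod_cast hd
      rw [c1, Nat.cast_choose_two] at hdR
      generalize (X.card : ℝ) = x at *
      have hx : x * (x - 1) ≤ (n + 3) / 3 * (n / 3) :=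
        mul_le_mul (by linarith) (by linarith) (by linarith) (by linarith)
      nlinarith
end

section
/- Let n ≥ 3, let V be an n-element set, let X ⊆ V with |X| = ⌊n/3⌋ − 1, and let H be the 3-graph on V whose edges are all 3-element subsets of V having at least one vertex in X. Then H contains no matching of size ⌊n/3⌋, hence H contains no tight Hamiltonian cycle; moreover, for every ε > 0 there exists n_0 such that for all n ≥ n_0, δ(H) ≥ (5/9 − ε)·C(n−1,2). -/
open Finset

/-- The 3-graph on `V` whose edges are all 3-element subsets of `V` meeting `X`. -/
def absX (V : Type) [DecidableEq V] [Fintype V] (X : Finset V) : Finset (Finset V) :=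
  ((Finset.univ : Finset V).powersetCard 3).filter fun e => (e ∩ X).Nonempty

theorem aux_matching {V : Type} [DecidableEq V] [Fintype V] (X : Finset V)
    (M : Finset (Finset V)) (hM : M ⊆ absX V X)
    (hd : (M : Set (Finset V)).Pairwise Disjoint) : M.card ≤ X.card := by
  have h : ∀ e ∈ M, ∃ x, x ∈ e ∩ X := by
    intro e he
    have := hM he
    unfold absX at this
    exact (Finset.mem_filter.1 this).2
  rcases M.eq_empty_or_nonempty with h0 | ⟨e0, he0⟩
  · simp [h0]
  haveI : Nonempty V := ⟨(h e0 he0).choose⟩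
  choose! g hg using h
  apply Finset.card_le_card_of_injOn g
  · intro e he
    exact (Finset.mem_inter.1 (hg e he)).2
  · intro a ha b hb hab
    by_contra hne
    have h1 := (Finset.mem_inter.1 (hg a ha)).1
    have h2 := (Finset.mem_inter.1 (hg b hb)).1
    rw [hab] at h1
    exact Finset.disjoint_left.1 (hd ha hb hne) h1 h2

theorem aux_cycle {V : Type} [DecidableEq V] [Fintype V] (H : Finset (Finset V))
    (h : HasTightHamCycle H) :
    ∃ M : Finset (Finset V), M ⊆ H ∧
      (M : Set (Finset V)).Pairwise Disjoint ∧ M.card = Fintype.card V / 3 := by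
  obtain ⟨f, hf, hH⟩ := h
  generalize hn : Fintype.card V = n at *
  let g : ℕ → V := fun k => f (k : ZMod n)
  have gi : ∀ a b : ℕ, a < n → b < n → g a = g b → a = b := by
    intro a b ha hb hab
    have h1 := hf.1 hab
    have h2 := (ZMod.natCast_eq_natCast_iff' a b n).1 h1
    rwa [Nat.mod_eq_of_lt ha, Nat.mod_eq_of_lt hb] at h2
  let E : ℕ → Finset V := fun k => {g (3 * k), g (3 * k + 1), g (3 * k + 2)}
  have hmem : ∀ k x, x ∈ E k ↔ ∃ r, r < 3 ∧ x = g (3 * k + r) := by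
    intro k x
    simp only [E, Finset.mem_insert, Finset.mem_singleton]
    constructor
    · rintro (h | h | h)
      · exact ⟨0, by omega, h⟩
      · exact ⟨1, by omega, h⟩
      · exact ⟨2, by omega, h⟩
    · rintro ⟨r, hr, h⟩
      interval_cases r
      · exact Or.inl h
      · exact Or.inr (Or.inl h)
      · exact Or.inr (Or.inr h)
  have hdis : ∀ j k, j < n / 3 → k < n / 3 → j ≠ k → Disjoint (E j) (E k) := by
    intro j k hj hk hjk
    rw [Finset.disjoint_left]
    intro x hx hx'
    obtain ⟨r, hr, h1⟩ := (hmem j x).1 hx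
    obtain ⟨s, hs, h2⟩ := (hmem k x).1 hx'
    have := gi _ _ (by omega) (by omega) (h1.symm.trans h2)
    omega
  refine ⟨(Finset.range (n / 3)).image E, ?_, ?_, ?_⟩
  · intro e he
    obtain ⟨k, hk, rfl⟩ := Finset.mem_image.1 he
    have := hH ((3 * k : ℕ) : ZMod n)
    simpa [E, g] using this
  · intro a ha b hb hab
    obtain ⟨j, hj, rfl⟩ := Finset.mem_image.1 (Finset.mem_coe.1 ha)
    obtain ⟨k, hk, rfl⟩ := Finset.mem_image.1 (Finset.mem_coe.1 hb)
    refine hdis j k (Finset.mem_range.1 hj) (Finset.mem_range.1 hk) ?_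
    rintro rfl
    exact hab rfl
  · rw [Finset.card_image_of_injOn, Finset.card_range]
    intro j hj k hk hjk
    by_contra hne
    have hd := hdis j k (Finset.mem_range.1 hj) (Finset.mem_range.1 hk) hne
    have h0 : g (3 * j + 0) ∈ E j := (hmem j _).2 ⟨0, by omega, rfl⟩
    have h1 : g (3 * j + 0) ∈ E k := by
      have h2 : E j = E k := hjk
      rw [← h2]; exact h0
    exact Finset.disjoint_left.1 hd h0 h1

theorem aux_degree {V : Type} [DecidableEq V] [Fintype V] (X : Finset V) (v : V) :
    (Fintype.card V - 1).choose 2 ≤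
      ((absX V X).filter fun e => v ∈ e).card + (Fintype.card V - X.card).choose 2 := by
  have h1 : ((Finset.univ.erase v).powersetCard 2 \ (Xᶜ).powersetCard 2).card ≤
      ((absX V X).filter fun e => v ∈ e).card := by
    apply Finset.card_le_card_of_injOn (fun p => insert v p)
    · intro p hp
      obtain ⟨hp1, hp2⟩ := Finset.mem_sdiff.1 (Finset.mem_coe.1 hp)
      obtain ⟨hs, hc⟩ := Finset.mem_powersetCard.1 hp1
      have hv : v ∉ p := fun h => by simpa using hs h
      have hx : ∃ x ∈ p, x ∈ X := by
        by_contra hcon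
        push Not at hcon
        exact hp2 (Finset.mem_powersetCard.2
          ⟨fun x hx => Finset.mem_compl.2 (hcon x hx), hc⟩)
      obtain ⟨x, hxp, hxX⟩ := hx
      simp only [absX, Finset.coe_filter, Set.mem_ofPred_eq, Finset.mem_filter,
        Finset.mem_powersetCard]
      exact ⟨⟨⟨Finset.subset_univ _, by rw [Finset.card_insert_of_notMem hv, hc]⟩,
        ⟨x, Finset.mem_inter.2 ⟨Finset.mem_insert_of_mem hxp, hxX⟩⟩⟩,
        Finset.mem_insert_self _ _⟩
    · intro p hp q hq hpq
      have hp1 := (Finset.mem_powersetCard.1 (Finset.mem_sdiff.1 (Finset.mem_coe.1 hp)).1).1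
      have hq1 := (Finset.mem_powersetCard.1 (Finset.mem_sdiff.1 (Finset.mem_coe.1 hq)).1).1
      have hv : v ∉ p := fun h => by simpa using hp1 h
      have hw : v ∉ q := fun h => by simpa using hq1 h
      have h3 : insert v p = insert v q := hpq
      rw [← Finset.erase_insert hv, h3, Finset.erase_insert hw]
  have h2 := Finset.le_card_sdiff ((Xᶜ).powersetCard 2) ((Finset.univ.erase v).powersetCard 2)
  rw [Finset.card_powersetCard, Finset.card_powersetCard, Finset.card_compl,
    Finset.card_erase_of_mem (Finset.mem_univ v), Finset.card_univ] at h2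
  omega

/-- If `n ≥ 3` and `|X| = ⌊n/3⌋ - 1`, then the 3-graph of all triples meeting `X` has no
matching of size `⌊n/3⌋`, hence no tight Hamiltonian cycle; moreover for every `ε > 0`
its minimum vertex degree is at least `(5/9 - ε)·C(n-1,2)` once `n` is large. -/
theorem stmt_3 :
    (∀ n : ℕ, 3 ≤ n → ∀ (V : Type) [DecidableEq V] [Fintype V], ∀ X : Finset V,
        Fintype.card V = n → X.card = n / 3 - 1 →
        (¬ ∃ M : Finset (Finset V), M ⊆ absX V X ∧
            (M : Set (Finset V)).Pairwise Disjoint ∧ M.card = n / 3) ∧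
        ¬ HasTightHamCycle (absX V X)) ∧
    (∀ ε : ℝ, 0 < ε → ∃ n₀ : ℕ, ∀ n : ℕ, n₀ ≤ n →
      ∀ (V : Type) [DecidableEq V] [Fintype V], ∀ X : Finset V,
        Fintype.card V = n → X.card = n / 3 - 1 →
        ∀ v : V, (5 / 9 - ε) * ((n - 1).choose 2 : ℝ) ≤
          (((absX V X).filter fun e => v ∈ e).card : ℝ)) := by
  constructor
  · intro n hn V _ _ X hV hX
    have key : ¬ ∃ M : Finset (Finset V), M ⊆ absX V X ∧
            (M : Set (Finset V)).Pairwise Disjoint ∧ M.card = n / 3 := by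
      rintro ⟨M, h1, h2, h3⟩
      have := aux_matching X M h1 h2
      omega
    refine ⟨key, fun h => key ?_⟩
    have := aux_cycle _ h
    rwa [hV] at this
  · intro ε hε
    refine ⟨max 3 (⌈6 / ε⌉₊ + 2), ?_⟩
    intro n hn V _ _ X hV hX v
    have hn3 : 3 ≤ n := le_trans (le_max_left _ _) hn
    have hn6 : ⌈6 / ε⌉₊ + 2 ≤ n := le_trans (le_max_right _ _) hn
    have hd := aux_degree X v
    rw [hV, hX] at hd
    have hm : 3 * (n - (n / 3 - 1)) ≤ 2 * n + 5 := by omega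
    generalize n - (n / 3 - 1) = m at hd hm
    generalize ((absX V X).filter fun e => v ∈ e).card = d at hd ⊢
    have hdR : ((n - 1).choose 2 : ℝ) ≤ d + (m.choose 2 : ℝ) := by exact_mod_cast hd
    have hc1 : ((n - 1).choose 2 : ℝ) = ((n : ℝ) - 1) * (n - 2) / 2 := by
      rw [Nat.cast_choose_two, Nat.cast_sub (by omega)]
      push_cast; ring
    have hmR : 3 * (m : ℝ) ≤ 2 * n + 5 := by exact_mod_cast hm
    have hnR : (3 : ℝ) ≤ n := by exact_mod_cast hn3
    have hm0 : (0 : ℝ) ≤ m := Nat.cast_nonneg m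
    have hc2 : (m.choose 2 : ℝ) ≤ (2 * n + 5) * (2 * n + 2) / 18 := by
      rw [Nat.cast_choose_two]
      nlinarith
    have hε6 : 6 ≤ ε * ((n : ℝ) - 2) := by
      have h1 : 6 / ε ≤ (⌈6 / ε⌉₊ : ℝ) := Nat.le_ceil _
      have h2 : (⌈6 / ε⌉₊ : ℝ) + 2 ≤ n := by exact_mod_cast hn6
      have h3 : 6 / ε ≤ (n : ℝ) - 2 := by linarith
      rw [div_le_iff₀ hε] at h3
      linarith
    have h7 : 6 * ((n : ℝ) - 1) ≤ ε * (n - 2) * (n - 1) :=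
      mul_le_mul_of_nonneg_right hε6 (by linarith)
    rw [hc1] at hdR ⊢
    nlinarith
end
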